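/- Suppose cd(a,M) = ara(a,M). If there exists an a-relative system of parameters of M contained in a² which is an a-weak sequence on M, then a · H^i_a(M) = 0 for all 0 ≤ i < cd(a,M). -/

import Mathlib

/-!
Formalization of a statement from "A theory of relative generalized Cohen-Macaulay modules"
by Divaani-Aazar, Ghanbari Doust, Tousi and Zakeri.

Throughout, `R` is a commutative Noetherian ring and `M` a finitely generated `R`-module.
Conventions used below:
* `locH I i M` is the local cohomology module `H^i_I(M)` (Mathlib's `localCohomology`).
* Conditions `cd(I,M) = c`, `ara(I,M) = n`, `f_I(M) = f`, `grade(I,M) = r` are expressed by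
  the predicates `IsCd`, `IsAra`, `IsFinDim`, `IsGrade`.
* Sequences are given as functions `Fin r → R`; `pSpan M x i = ⟨x_0,…,x_{i-1}⟩M`.
* Koszul (co)homology is defined via the explicit (co)chain complex on the `p`-element
  subsets of `{0,…,n-1}`, and the canonical map `λ^i` into local cohomology is the structure
  map (at exponent 1) into the direct limit of Koszul cohomologies of powers of the sequence,
  which is the realization of `H^i_{⟨x⟩}(M)` used in the paper (2.1(iv)).
-/

open CategoryTheory

noncomputable section

variable {R : Type} [CommRing R]

/-! ### Sequences: prefix spans, weak sequences, filter regular sequences, d-sequences -/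

/-- `pSpan M x i` is the submodule `⟨x_0, …, x_{i-1}⟩M` of `M`. -/
def pSpan (M : Type) [AddCommGroup M] [Module R M] {r : ℕ} (x : Fin r → R) (i : Fin r) :
    Submodule R M :=
  Ideal.span (x '' {j | j < i}) • (⊤ : Submodule R M)

/-- `x_1, …, x_r` is an `I`-weak sequence on `M`:
`(⟨x_1,…,x_{i-1}⟩M :_M x_i) ⊆ (⟨x_1,…,x_{i-1}⟩M :_M I)` for all `i`. -/
def IsWeakSeq (I : Ideal R) (M : Type) [AddCommGroup M] [Module R M] {r : ℕ}
    (x : Fin r → R) : Prop :=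
  ∀ i : Fin r, ∀ m : M, x i • m ∈ pSpan M x i → ∀ a ∈ I, a • m ∈ pSpan M x i

/-- `x_1, …, x_r` is an `I`-filter regular sequence on `M`:
`(⟨x_1,…,x_{i-1}⟩M :_M x_i) ⊆ ⋃ₜ (⟨x_1,…,x_{i-1}⟩M :_M I^t)` for all `i`. -/
def IsFilterRegSeq (I : Ideal R) (M : Type) [AddCommGroup M] [Module R M] {r : ℕ}
    (x : Fin r → R) : Prop :=
  ∀ i : Fin r, ∀ m : M, x i • m ∈ pSpan M x i →
    ∃ t : ℕ, ∀ a ∈ I ^ t, a • m ∈ pSpan M x i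

/-- An unconditioned `I`-filter regular sequence: filter regular in any order. -/
def IsUncondFilterRegSeq (I : Ideal R) (M : Type) [AddCommGroup M] [Module R M] {r : ℕ}
    (x : Fin r → R) : Prop :=
  ∀ σ : Equiv.Perm (Fin r), IsFilterRegSeq I M (x ∘ σ)

/-- An unconditioned `I`-weak sequence: all positive powers, in any order, form an
`I`-weak sequence. -/
def IsUncondWeakSeq (I : Ideal R) (M : Type) [AddCommGroup M] [Module R M] {r : ℕ}
    (x : Fin r → R) : Prop :=
  ∀ σ : Equiv.Perm (Fin r), ∀ α : Fin r → ℕ, (∀ k, 0 < α k) →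
    IsWeakSeq I M fun k => x (σ k) ^ α k

/-- `x_1, …, x_r` is a d-sequence on `M`:
`(⟨x_1,…,x_{i-1}⟩M :_M x_i x_j) = (⟨x_1,…,x_{i-1}⟩M :_M x_j)` for all `i ≤ j`. -/
def IsDSeq (M : Type) [AddCommGroup M] [Module R M] {r : ℕ} (x : Fin r → R) : Prop :=
  ∀ i j : Fin r, i ≤ j → ∀ m : M,
    ((x i * x j) • m ∈ pSpan M x i ↔ x j • m ∈ pSpan M x i)

/-- An u.s.d-sequence on `M`: all positive powers, in any order, form a d-sequence. -/
def IsUSDSeq (M : Type) [AddCommGroup M] [Module R M] {r : ℕ} (x : Fin r → R) : Prop :=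
  ∀ σ : Equiv.Perm (Fin r), ∀ α : Fin r → ℕ, (∀ k, 0 < α k) →
    IsDSeq M fun k => x (σ k) ^ α k

/-! ### Local cohomology, cohomological dimension, arithmetic rank -/

/-- The `i`-th local cohomology module `H^i_I(M)`. -/
abbrev locH (I : Ideal R) (i : ℕ) (M : Type) [AddCommGroup M] [Module R M] : ModuleCat R :=
  (localCohomology I i).obj (ModuleCat.of R M)

/-- `cd(I, M) = c`: the cohomological dimension of `I` on `M` equals `c`, i.e.
`H^c_I(M) ≠ 0` and `H^i_I(M) = 0` for all `i > c`. -/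
def IsCd (I : Ideal R) (M : Type) [AddCommGroup M] [Module R M] (c : ℕ) : Prop :=
  Nontrivial (locH I c M) ∧ ∀ i : ℕ, c < i → Subsingleton (locH I i M)

/-- `f_I(M) = f`: the `I`-finiteness dimension of `M` equals `f`, i.e. `f` is the least
integer such that `H^f_I(M)` is not finitely generated. -/
def IsFinDim (I : Ideal R) (M : Type) [AddCommGroup M] [Module R M] (f : ℕ) : Prop :=
  (∀ i : ℕ, i < f → Module.Finite R (locH I i M)) ∧ ¬ Module.Finite R (locH I f M)

/-- `M` is `I`-relative generalized Cohen-Macaulay: `cd(I,M) ≤ 0` or `cd(I,M) = f_I(M)`. -/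
def IsRelGCM (I : Ideal R) (M : Type) [AddCommGroup M] [Module R M] : Prop :=
  (∀ i : ℕ, 0 < i → Subsingleton (locH I i M)) ∨
    ∃ c : ℕ, IsCd I M c ∧ IsFinDim I M c

/-- `ara(I, M) = n`: the arithmetic rank of `I` with respect to `M` equals `n`, i.e. `n` is the
least integer such that there are `x_1, …, x_n ∈ R` with
`Rad(⟨x_1,…,x_n⟩ + Ann M) = Rad(I + Ann M)`. -/
def IsAra (I : Ideal R) (M : Type) [AddCommGroup M] [Module R M] (n : ℕ) : Prop :=
  IsLeast {k : ℕ | ∃ x : Fin k → R,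
    (Ideal.span (Set.range x) + Module.annihilator R M).radical
      = (I + Module.annihilator R M).radical} n

/-- `x_1, …, x_c` is an `I`-relative system of parameters of `M` (where `c = cd(I,M)`):
the `x_i` lie in `I` and `Rad(⟨x_1,…,x_c⟩ + Ann M) = Rad(I + Ann M)`. -/
def IsRsop (I : Ideal R) (M : Type) [AddCommGroup M] [Module R M] {c : ℕ}
    (x : Fin c → R) : Prop :=
  (∀ j, x j ∈ I) ∧
    (Ideal.span (Set.range x) + Module.annihilator R M).radical
      = (I + Module.annihilator R M).radical

/-!
Write `H^i` for `H^i_I`, and let `x` be the first term of the sequence. The weak sequence condition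
says that `0 :_M x` is killed by `I`; being `I`-torsion, it has no higher local cohomology, so
`H^{i+1}(M)` embeds into `H^{i+1}(xM)`. The kernel of `H^{i+1}(xM) ⟶ H^{i+1}(M)` is a quotient of
`H^i(M ⧸ xM)`, which is killed by `I` by induction along the sequence. As the composite of the two
maps is multiplication by `x`, every `z ∈ H^{i+1}(M)` with `x • z = 0` satisfies `I • z = 0`.
Because `x ∈ I ^ 2` and `H^{i+1}(M)` is `I`-torsion, this forces `I • H^{i+1}(M) = 0`.
-/

universe t v u w

section Homology

variable {S : Type t} [Ring S] {ι : Type w} {c : ComplexShape ι}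
  (K : HomologicalComplex (ModuleCat.{v} S) c)

lemma exists_iCycles_eq {i j : ι} (hij : c.next i = j) (x : K.X i) (hx : K.d i j x = 0) :
    ∃ z : K.cycles i, K.iCycles i z = x :=
  ⟨K.cyclesMk x j hij hx, K.i_cyclesMk x j hij hx⟩

lemma homologyπ_surjective (i : ι) : Function.Surjective (K.homologyπ i) :=
  (ModuleCat.epi_iff_surjective _).1 inferInstance

lemma homologyπ_eq_zero_iff {i j : ι} (hij : c.prev j = i) (z : K.cycles j) :
    K.homologyπ j z = 0 ↔ ∃ x : K.X i, K.d i j x = K.iCycles j z := by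
  have hexact := (ShortComplex.mk (K.toCycles i j) (K.homologyπ j)
    (K.toCycles_comp_homologyπ i j)).exact_of_g_is_cokernel (K.homologyIsCokernel i j hij)
  have hinj := (ModuleCat.mono_iff_injective (K.iCycles j)).1 inferInstance
  simp only [← K.toCycles_i i j, ModuleCat.comp_apply, hinj.eq_iff]
  exact ((ShortComplex.ShortExact.moduleCat_exact_iff_function_exact _).1 hexact) z

lemma homologyUnop_hom_naturality {V : Type u} [Category.{v} V] [Abelian V]
    {K L : HomologicalComplex Vᵒᵖ c} (φ : K ⟶ L) (i : ι) :
    HomologicalComplex.homologyMap ((HomologicalComplex.unopFunctor V c).map φ.op) i ≫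
        (K.homologyUnop i).hom =
      (L.homologyUnop i).hom ≫ (HomologicalComplex.homologyMap φ i).unop :=
  congrArg Quiver.Hom.unop (HomologicalComplex.homologyOp_hom_naturality
    ((HomologicalComplex.unopFunctor V c).map φ.op) i).symm

end Homology

section ExtComparison

variable {C : Type u} [Category.{v} C] [Abelian C] {A : Type t} [CommRing A] [Linear A C]

/-- The map `Hom(L, Y) ⟶ Hom(K, Y)` of cochain complexes induced by a map of chain complexes. -/
def linearYonedaObjMap {K L : ChainComplex C ℕ} (φ : K ⟶ L) (Y : C) :
    L.linearYonedaObj A Y ⟶ K.linearYonedaObj A Y :=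
  (HomologicalComplex.unopFunctor (ModuleCat A) (ComplexShape.down ℕ)).map
    ((((linearYoneda A C).obj Y).rightOp.mapHomologicalComplex _).map φ).op

/-- The map `Hom(K, Y) ⟶ Hom(K, Y')` of cochain complexes induced by a map `Y ⟶ Y'`. -/
def linearYonedaMapObj (K : ChainComplex C ℕ) {Y Y' : C} (g : Y ⟶ Y') :
    K.linearYonedaObj A Y ⟶ K.linearYonedaObj A Y' :=
  (HomologicalComplex.unopFunctor (ModuleCat A) (ComplexShape.down ℕ)).map
    ((NatTrans.mapHomologicalComplex (NatTrans.rightOp ((linearYoneda A C).map g)) _).app K).op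

lemma d_comp_iCycles_linearYonedaObj {Y : C} (K : ChainComplex C ℕ) (m n : ℕ)
    (z : (K.linearYonedaObj A Y).cycles n) :
    K.d m n ≫ (K.linearYonedaObj A Y).iCycles n z = 0 :=
  ConcreteCategory.congr_hom ((K.linearYonedaObj A Y).iCycles_d n m) z

section EnoughProjectives

variable [EnoughProjectives C]

lemma isoExt_inv_surjective {X : C} (P : ProjectiveResolution X) (n : ℕ) (Y : C) :
    Function.Surjective (P.isoExt (R := A) n Y).inv :=
  (P.isoExt n Y).toLinearEquiv.symm.surjective

lemma isoExt_inv {X : C} (P : ProjectiveResolution X) (n : ℕ) (Y : C) :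
    (P.isoExt n Y).inv =
      (HomologicalComplex.homologyUnop
        ((((linearYoneda A C).obj Y).rightOp.mapHomologicalComplex _).obj P.complex) n).hom ≫
      (P.isoLeftDerivedObj ((linearYoneda A C).obj Y).rightOp n).hom.unop :=
  rfl

lemma isoExt_inv_comp_map_app {X X' : C} {f : X ⟶ X'} {P : ProjectiveResolution X}
    {P' : ProjectiveResolution X'} (φ : P.Hom P' f) (n : ℕ) (Y : C) :
    (P'.isoExt n Y).inv ≫ ((Ext A C n).map f.op).app Y =
      HomologicalComplex.homologyMap (linearYonedaObjMap φ.hom Y) n ≫ (P.isoExt n Y).inv := by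
  have hφ : φ.hom.f 0 ≫ P'.π.f 0 = P.π.f 0 ≫ f := by simpa using φ.hom_f_zero_comp_π_f_zero
  have derived_naturality := congrArg Quiver.Hom.unop
    (ProjectiveResolution.isoLeftDerivedObj_hom_naturality f P P' φ.hom hφ
      ((linearYoneda A C).obj Y).rightOp n)
  have unop_naturality := homologyUnop_hom_naturality
    ((((linearYoneda A C).obj Y).rightOp.mapHomologicalComplex _).map φ.hom) n
  rw [isoExt_inv, isoExt_inv]
  exact ((CommSq.mk unop_naturality.symm).horiz_comp (CommSq.mk derived_naturality)).w

lemma isoExt_inv_comp_obj_map {X : C} (P : ProjectiveResolution X) (n : ℕ) {Y Y' : C}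
    (g : Y ⟶ Y') :
    (P.isoExt n Y).inv ≫ ((Ext A C n).obj (.op X)).map g =
      HomologicalComplex.homologyMap (linearYonedaMapObj P.complex g) n ≫
        (P.isoExt n Y').inv := by
  let α := NatTrans.rightOp ((linearYoneda A C).map g)
  have derived_naturality := congrArg Quiver.Hom.unop ((Iso.eq_comp_inv _).1
    ((P.leftDerived_app_eq α n).trans (Category.assoc ..).symm))
  have unop_naturality := homologyUnop_hom_naturality
    ((NatTrans.mapHomologicalComplex α _).app P.complex) n
  rw [isoExt_inv, isoExt_inv]
  exact ((CommSq.mk unop_naturality.symm).horiz_comp (CommSq.mk derived_naturality)).w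

end EnoughProjectives

open CochainComplex.HomComplex

variable [HasExt.{w} C] {X Y : C} (P : ProjectiveResolution X)

lemma smul_extMk (a : A) {n : ℕ} (f : P.complex.X n ⟶ Y) (m : ℕ) (hm : n + 1 = m)
    (hf : P.complex.d m n ≫ f = 0) :
    a • P.extMk f m hm hf = P.extMk (a • f) m hm (by simp [hf]) := by
  rw [Abelian.Ext.smul_eq_comp_mk₀, P.extMk_comp_mk₀]
  simp

lemma extMk_eq_zero_iff_exists_prev {n p : ℕ} (hp : (ComplexShape.up ℕ).prev n = p)
    (f : P.complex.X n ⟶ Y) (m : ℕ) (hm : n + 1 = m) (hf : P.complex.d m n ≫ f = 0) :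
    P.extMk f m hm hf = 0 ↔ ∃ g : P.complex.X p ⟶ Y, P.complex.d n p ≫ g = f := by
  subst hm
  cases n with
  | succ n =>
    obtain rfl : n = p := by simpa using hp
    exact P.extMk_eq_zero_iff f _ rfl hf n rfl
  | zero =>
    obtain rfl : 0 = p := by simpa using hp
    have hd : P.cochainComplex.d (-(0 : ℕ)) 1 = 0 :=
      (P.cochainComplex.isZero_of_isStrictlyLE 0 1).eq_of_tgt _ _
    rw [← P.extEquivCohomologyClass.apply_eq_iff_eq, P.extEquivCohomologyClass_extMk,
      P.extEquivCohomologyClass_zero, CohomologyClass.mk_eq_zero_iff,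
      Cocycle.toSingleMk_mem_coboundaries_iff _ _ _ _ _ 1 (by simp), hd]
    simp [eq_comm (a := (0 : _ ⟶ _))]

/-- The linear map taking a degree `n` cocycle `P.complex.X n ⟶ Y` of a projective resolution `P`
of `X` to its class in `Abelian.Ext X Y n`. -/
def extMkLinearMap (P : ProjectiveResolution X) (Y : C) (n : ℕ) :
    (P.complex.linearYonedaObj A Y).cycles n →ₗ[A] Abelian.Ext X Y n where
  toFun z := P.extMk ((P.complex.linearYonedaObj A Y).iCycles n z) (n + 1) rfl
    (d_comp_iCycles_linearYonedaObj ..)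
  map_add' z z' := by simp only [map_add]; exact (P.add_extMk ..).symm
  map_smul' a z := by simp only [map_smul]; exact (smul_extMk P ..).symm

lemma extMkLinearMap_surjective (n : ℕ) :
    Function.Surjective (extMkLinearMap (A := A) P Y n) := by
  intro e
  obtain ⟨f, hf, rfl⟩ := P.extMk_surjective e (n + 1) rfl
  obtain ⟨z, rfl⟩ := exists_iCycles_eq (P.complex.linearYonedaObj A Y) (by simp) f hf
  exact ⟨z, rfl⟩

lemma ker_extMkLinearMap (n : ℕ) : LinearMap.ker (extMkLinearMap (A := A) P Y n) =
    LinearMap.ker ((P.complex.linearYonedaObj A Y).homologyπ n).hom := by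
  ext z
  exact (extMk_eq_zero_iff_exists_prev P rfl _ _ rfl
    (d_comp_iCycles_linearYonedaObj ..)).trans
      (homologyπ_eq_zero_iff (P.complex.linearYonedaObj A Y) rfl z).symm

lemma extMkLinearMap_linearYonedaObjMap {X' : C} {f : X' ⟶ X} {P' : ProjectiveResolution X'}
    (φ : P'.Hom P f) (n : ℕ) (z : (P.complex.linearYonedaObj A Y).cycles n) :
    extMkLinearMap P' Y n (HomologicalComplex.cyclesMap (linearYonedaObjMap φ.hom Y) n z) =
      (Abelian.Ext.mk₀ f).comp (extMkLinearMap P Y n z) (zero_add n) := by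
  refine Eq.trans ?_ (ProjectiveResolution.mk₀_comp_extMk _ _ rfl
    (d_comp_iCycles_linearYonedaObj ..) φ).symm
  change P'.extMk _ _ rfl (d_comp_iCycles_linearYonedaObj ..) = _
  congr 1
  exact ConcreteCategory.congr_hom
    (HomologicalComplex.cyclesMap_i (linearYonedaObjMap φ.hom Y) n) z

lemma extMkLinearMap_linearYonedaMapObj (n : ℕ) {Y' : C} (g : Y ⟶ Y')
    (z : (P.complex.linearYonedaObj A Y).cycles n) :
    extMkLinearMap P Y' n (HomologicalComplex.cyclesMap (linearYonedaMapObj P.complex g) n z) =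
      (extMkLinearMap P Y n z).comp (Abelian.Ext.mk₀ g) (add_zero n) := by
  refine Eq.trans ?_ (P.extMk_comp_mk₀ _ _ rfl (d_comp_iCycles_linearYonedaObj ..) g).symm
  change P.extMk _ _ rfl (d_comp_iCycles_linearYonedaObj ..) = _
  congr 1
  exact ConcreteCategory.congr_hom
    (HomologicalComplex.cyclesMap_i (linearYonedaMapObj P.complex g) n) z

/-- The cohomology of `Hom(P, Y)`, for a projective resolution `P` of `X`, is the group
`Abelian.Ext X Y n` of morphisms in the derived category. -/
def homologyLinearYonedaObjEquiv (n : ℕ) :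
    (P.complex.linearYonedaObj A Y).homology n ≃ₗ[A] Abelian.Ext X Y n :=
  (((P.complex.linearYonedaObj A Y).homologyπ n).hom.quotKerEquivOfSurjective
    (homologyπ_surjective _ n)).symm ≪≫ₗ
  Submodule.quotEquivOfEq _ _ (ker_extMkLinearMap P n).symm ≪≫ₗ
  (extMkLinearMap P Y n).quotKerEquivOfSurjective (extMkLinearMap_surjective P n)

lemma homologyLinearYonedaObjEquiv_homologyπ (n : ℕ)
    (z : (P.complex.linearYonedaObj A Y).cycles n) :
    homologyLinearYonedaObjEquiv P n ((P.complex.linearYonedaObj A Y).homologyπ n z) =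
      extMkLinearMap P Y n z := by
  have : (((P.complex.linearYonedaObj A Y).homologyπ n).hom.quotKerEquivOfSurjective
      (homologyπ_surjective _ n)).symm ((P.complex.linearYonedaObj A Y).homologyπ n z) =
      Submodule.Quotient.mk z := by
    rw [LinearEquiv.symm_apply_eq]; rfl
  simp only [homologyLinearYonedaObjEquiv, LinearEquiv.trans_apply, this]
  rfl

lemma homologyLinearYonedaObjEquiv_linearYonedaObjMap {X' : C} {f : X' ⟶ X}
    {P' : ProjectiveResolution X'} (φ : P'.Hom P f) (n : ℕ)
    (y : (P.complex.linearYonedaObj A Y).homology n) :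
    homologyLinearYonedaObjEquiv P' n
        (HomologicalComplex.homologyMap (linearYonedaObjMap φ.hom Y) n y) =
      (Abelian.Ext.mk₀ f).comp (homologyLinearYonedaObjEquiv P n y) (zero_add n) := by
  obtain ⟨z, rfl⟩ := homologyπ_surjective _ n y
  rw [homologyLinearYonedaObjEquiv_homologyπ, ← extMkLinearMap_linearYonedaObjMap P φ,
    ← ModuleCat.comp_apply, HomologicalComplex.homologyπ_naturality, ModuleCat.comp_apply,
    homologyLinearYonedaObjEquiv_homologyπ]

lemma homologyLinearYonedaObjEquiv_linearYonedaMapObj (n : ℕ) {Y' : C} (g : Y ⟶ Y')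
    (y : (P.complex.linearYonedaObj A Y).homology n) :
    homologyLinearYonedaObjEquiv P n
        (HomologicalComplex.homologyMap (linearYonedaMapObj P.complex g) n y) =
      (homologyLinearYonedaObjEquiv P n y).comp (Abelian.Ext.mk₀ g) (add_zero n) := by
  obtain ⟨z, rfl⟩ := homologyπ_surjective _ n y
  rw [homologyLinearYonedaObjEquiv_homologyπ, ← extMkLinearMap_linearYonedaMapObj P n g,
    ← ModuleCat.comp_apply, HomologicalComplex.homologyπ_naturality, ModuleCat.comp_apply,
    homologyLinearYonedaObjEquiv_homologyπ]

variable [EnoughProjectives C]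

/-- The comparison between the Ext modules defined by the left derived functors of `Hom(-, Y)`,
which enter Mathlib's local cohomology, and `Abelian.Ext`, which has long exact sequences. -/
def extEquivAbelianExt (X Y : C) (n : ℕ) :
    ((Ext A C n).obj (.op X)).obj Y ≃ₗ[A] Abelian.Ext X Y n :=
  ((projectiveResolution X).isoExt n Y).toLinearEquiv ≪≫ₗ
    homologyLinearYonedaObjEquiv (projectiveResolution X) n

lemma extEquivAbelianExt_isoExt_inv (n : ℕ)
    (y : ((projectiveResolution X).complex.linearYonedaObj A Y).homology n) :
    extEquivAbelianExt X Y n (((projectiveResolution X).isoExt n Y).inv y) =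
      homologyLinearYonedaObjEquiv (projectiveResolution X) n y :=
  congrArg (homologyLinearYonedaObjEquiv (projectiveResolution X) n)
    (ConcreteCategory.congr_hom ((projectiveResolution X).isoExt (R := A) n Y).inv_hom_id y)

lemma extEquivAbelianExt_map_app {X' : C} (f : X' ⟶ X) (n : ℕ)
    (e : ((Ext A C n).obj (.op X)).obj Y) :
    extEquivAbelianExt X' Y n (((Ext A C n).map f.op).app Y e) =
      (Abelian.Ext.mk₀ f).comp (extEquivAbelianExt X Y n e) (zero_add n) := by
  let φ : (projectiveResolution X').Hom (projectiveResolution X) f :=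
    ⟨ProjectiveResolution.lift f _ _, by
      simpa using ProjectiveResolution.lift_commutes_zero f _ _⟩
  obtain ⟨y, rfl⟩ := isoExt_inv_surjective (projectiveResolution X) n Y e
  rw [← ModuleCat.comp_apply, isoExt_inv_comp_map_app φ, ModuleCat.comp_apply,
    extEquivAbelianExt_isoExt_inv, extEquivAbelianExt_isoExt_inv,
    homologyLinearYonedaObjEquiv_linearYonedaObjMap]

lemma extEquivAbelianExt_obj_map (n : ℕ) {Y' : C} (g : Y ⟶ Y')
    (e : ((Ext A C n).obj (.op X)).obj Y) :
    extEquivAbelianExt X Y' n (((Ext A C n).obj (.op X)).map g e) =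
      (extEquivAbelianExt X Y n e).comp (Abelian.Ext.mk₀ g) (add_zero n) := by
  obtain ⟨y, rfl⟩ := isoExt_inv_surjective (projectiveResolution X) n Y e
  rw [← ModuleCat.comp_apply, isoExt_inv_comp_obj_map, ModuleCat.comp_apply,
    extEquivAbelianExt_isoExt_inv, extEquivAbelianExt_isoExt_inv,
    homologyLinearYonedaObjEquiv_linearYonedaMapObj]

end ExtComparison

section LocalCohomology

variable {A : Type u} [CommRing A] (I : Ideal A)

/-- The projection `A ⧸ I ^ s ⟶ A ⧸ I ^ t` for `t ≤ s`, as a morphism of modules. -/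
def quotientPowMap {t s : ℕ} (h : t ≤ s) :
    ModuleCat.of A (A ⧸ I ^ s) ⟶ ModuleCat.of A (A ⧸ I ^ t) :=
  ModuleCat.ofHom (Submodule.factor (Ideal.pow_le_pow_right h))

/-- The direct system of the modules `Ext (A ⧸ I ^ t) M i` mapping to local cohomology. -/
def localCohomologyCocone (i : ℕ) (M : ModuleCat.{u} A) :
    Limits.Cocone (localCohomology.diagram (localCohomology.idealPowersDiagram I) i ⋙
      (evaluation _ _).obj M) :=
  have := localCohomology.hasColimitDiagram.{u, 0} (localCohomology.idealPowersDiagram I) i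
  ((evaluation _ _).obj M).mapCocone
    (Limits.colimit.cocone (localCohomology.diagram (localCohomology.idealPowersDiagram I) i))

/-- Local cohomology is the colimit of the modules `Ext (A ⧸ I ^ t) M i`. -/
def isColimitLocalCohomologyCocone (i : ℕ) (M : ModuleCat.{u} A) :
    Limits.IsColimit (localCohomologyCocone I i M) :=
  have := localCohomology.hasColimitDiagram.{u, 0} (localCohomology.idealPowersDiagram I) i
  Limits.isColimitOfPreserves ((evaluation _ _).obj M) (Limits.colimit.isColimit _)

/-- The class in `H^i_I(M)` of an element of `Ext^i(A ⧸ I ^ t, M)`. -/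
def localCohomologyMk (i : ℕ) (M : ModuleCat.{u} A) (t : ℕ) :
    Abelian.Ext (ModuleCat.of A (A ⧸ I ^ t)) M i →ₗ[A] (localCohomology I i).obj M :=
  ((localCohomologyCocone I i M).ι.app (.op (.op t))).hom ∘ₗ
    (extEquivAbelianExt (A := A) (ModuleCat.of A (A ⧸ I ^ t)) M i).symm.toLinearMap

variable {I} {i : ℕ} {M : ModuleCat.{u} A}

lemma localCohomologyMk_extEquivAbelianExt {t : ℕ}
    (e : ((Ext A (ModuleCat.{u} A) i).obj (.op (ModuleCat.of A (A ⧸ I ^ t)))).obj M) :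
    localCohomologyMk I i M t (extEquivAbelianExt _ _ _ e) =
      (localCohomologyCocone I i M).ι.app (.op (.op t)) e :=
  congrArg ((localCohomologyCocone I i M).ι.app (.op (.op t)))
    ((extEquivAbelianExt _ _ _).symm_apply_apply e)

lemma exists_localCohomologyMk_eq (z : (localCohomology I i).obj M) :
    ∃ t e, localCohomologyMk I i M t e = z := by
  have := Limits.preservesFilteredColimitsOfSize_shrink.{0, u, 0, u} (forget (ModuleCat.{u} A))
  obtain ⟨t, e, rfl⟩ :=
    Limits.Concrete.isColimit_exists_rep _ (isColimitLocalCohomologyCocone I i M) z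
  exact ⟨t.unop.unop, _, localCohomologyMk_extEquivAbelianExt e⟩

lemma localCohomologyMk_quotientPowMap_comp {t s : ℕ} (h : t ≤ s)
    (e : Abelian.Ext (ModuleCat.of A (A ⧸ I ^ t)) M i) :
    localCohomologyMk I i M s
        ((Abelian.Ext.mk₀ (quotientPowMap I h)).comp e (zero_add i)) =
      localCohomologyMk I i M t e := by
  obtain ⟨e, rfl⟩ := (extEquivAbelianExt (A := A) _ _ _).surjective e
  rw [← extEquivAbelianExt_map_app, localCohomologyMk_extEquivAbelianExt,
    localCohomologyMk_extEquivAbelianExt]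
  exact ConcreteCategory.congr_hom ((localCohomologyCocone I i M).w (homOfLE h).op.op) e

lemma localCohomologyMk_eq_zero_iff {t : ℕ}
    (e : Abelian.Ext (ModuleCat.of A (A ⧸ I ^ t)) M i) :
    localCohomologyMk I i M t e = 0 ↔ ∃ (s : ℕ) (h : t ≤ s),
      (Abelian.Ext.mk₀ (quotientPowMap I h)).comp e (zero_add i) = 0 := by
  refine ⟨fun he ↦ ?_, fun ⟨s, h, he⟩ ↦ ?_⟩
  · have := Limits.preservesFilteredColimitsOfSize_shrink.{0, u, 0, u} (forget (ModuleCat.{u} A))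
    obtain ⟨e, rfl⟩ := (extEquivAbelianExt (A := A) _ _ _).surjective e
    rw [localCohomologyMk_extEquivAbelianExt] at he
    have he' : (localCohomologyCocone I i M).ι.app (.op (.op t)) e =
        (localCohomologyCocone I i M).ι.app (.op (.op t)) 0 := he.trans (map_zero _).symm
    obtain ⟨s, f, g, hfg⟩ := Limits.Concrete.isColimit_exists_of_rep_eq _
      (isColimitLocalCohomologyCocone I i M) _ _ he'
    refine ⟨s.unop.unop, leOfHom f.unop.unop, ?_⟩
    rw [← extEquivAbelianExt_map_app, LinearEquiv.map_eq_zero_iff]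
    exact hfg.trans (map_zero _)
  · rw [← localCohomologyMk_quotientPowMap_comp h, he, map_zero]

lemma localCohomology_map_localCohomologyMk {M' : ModuleCat.{u} A} (f : M ⟶ M') {t : ℕ}
    (e : Abelian.Ext (ModuleCat.of A (A ⧸ I ^ t)) M i) :
    (localCohomology I i).map f (localCohomologyMk I i M t e) =
      localCohomologyMk I i M' t (e.comp (Abelian.Ext.mk₀ f) (add_zero i)) := by
  have := localCohomology.hasColimitDiagram.{u, 0} (localCohomology.idealPowersDiagram I) i
  obtain ⟨e, rfl⟩ := (extEquivAbelianExt (A := A) _ _ _).surjective e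
  rw [← extEquivAbelianExt_obj_map, localCohomologyMk_extEquivAbelianExt,
    localCohomologyMk_extEquivAbelianExt]
  exact ConcreteCategory.congr_hom ((Limits.colimit.ι (localCohomology.diagram
    (localCohomology.idealPowersDiagram I) i) (.op (.op t))).naturality f).symm e

/-- The cocone over the direct system defining local cohomology given by a compatible family of
maps out of the modules `Ext (A ⧸ I ^ t) M i`. -/
def localCohomologyCoconeOfCompatible {N : ModuleCat.{u} A}
    (φ : ∀ t, Abelian.Ext (ModuleCat.of A (A ⧸ I ^ t)) M i →ₗ[A] N)
    (hφ : ∀ ⦃t s : ℕ⦄ (h : t ≤ s) e,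
      φ s ((Abelian.Ext.mk₀ (quotientPowMap I h)).comp e (zero_add i)) = φ t e) :
    Limits.Cocone (localCohomology.diagram (localCohomology.idealPowersDiagram I) i ⋙
      (evaluation _ _).obj M) where
  pt := N
  ι :=
    { app t := ModuleCat.ofHom
        (φ t.unop.unop ∘ₗ (extEquivAbelianExt (A := A) _ M i).toLinearMap)
      naturality _ s f := ModuleCat.hom_ext <| LinearMap.ext fun e ↦
        (congrArg (φ s.unop.unop) (extEquivAbelianExt_map_app
          (quotientPowMap I (leOfHom f.unop.unop)) i e)).trans
          (hφ (leOfHom f.unop.unop) _) }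

/-- The map out of local cohomology induced by a compatible family of maps out of the modules
`Ext (A ⧸ I ^ t) M i`. -/
def localCohomologyDesc {N : ModuleCat.{u} A}
    (φ : ∀ t, Abelian.Ext (ModuleCat.of A (A ⧸ I ^ t)) M i →ₗ[A] N)
    (hφ : ∀ ⦃t s : ℕ⦄ (h : t ≤ s) e,
      φ s ((Abelian.Ext.mk₀ (quotientPowMap I h)).comp e (zero_add i)) = φ t e) :
    (localCohomology I i).obj M ⟶ N :=
  (isColimitLocalCohomologyCocone I i M).desc (localCohomologyCoconeOfCompatible φ hφ)

lemma localCohomologyDesc_localCohomologyMk {N : ModuleCat.{u} A}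
    (φ : ∀ t, Abelian.Ext (ModuleCat.of A (A ⧸ I ^ t)) M i →ₗ[A] N)
    (hφ : ∀ ⦃t s : ℕ⦄ (h : t ≤ s) e,
      φ s ((Abelian.Ext.mk₀ (quotientPowMap I h)).comp e (zero_add i)) = φ t e) {t : ℕ}
    (e : Abelian.Ext (ModuleCat.of A (A ⧸ I ^ t)) M i) :
    localCohomologyDesc φ hφ (localCohomologyMk I i M t e) = φ t e := by
  obtain ⟨e, rfl⟩ := (extEquivAbelianExt (A := A) _ _ _).surjective e
  rw [localCohomologyMk_extEquivAbelianExt]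
  exact ConcreteCategory.congr_hom ((isColimitLocalCohomologyCocone I i M).fac
    (localCohomologyCoconeOfCompatible φ hφ) (.op (.op t))) e

section LongExactSequence

variable {S : ShortComplex (ModuleCat.{u} A)} (hS : S.ShortExact)

variable (I i) in
/-- The connecting homomorphism of local cohomology, induced by Yoneda composition with the class
of the extension. -/
def localCohomologyδ :
    (localCohomology I i).obj S.X₃ ⟶ (localCohomology I (i + 1)).obj S.X₁ :=
  localCohomologyDesc
    (fun t ↦ localCohomologyMk I (i + 1) S.X₁ t ∘ₗ hS.extClass.postcompOfLinear A _ rfl)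
    fun _ s h e ↦ (congrArg (localCohomologyMk I (i + 1) S.X₁ s)
      (Abelian.Ext.comp_assoc _ e hS.extClass (zero_add i) rfl (by lia))).trans
        (localCohomologyMk_quotientPowMap_comp h _)

lemma localCohomologyδ_localCohomologyMk {t : ℕ}
    (e : Abelian.Ext (ModuleCat.of A (A ⧸ I ^ t)) S.X₃ i) :
    localCohomologyδ I i hS (localCohomologyMk I i S.X₃ t e) =
      localCohomologyMk I (i + 1) S.X₁ t (e.comp hS.extClass rfl) :=
  localCohomologyDesc_localCohomologyMk ..

include hS in
lemma localCohomology_exact₂ :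
    Function.Exact ((localCohomology I i).map S.f) ((localCohomology I i).map S.g) := by
  intro z
  refine ⟨fun hz ↦ ?_, ?_⟩
  · obtain ⟨t, e, rfl⟩ := exists_localCohomologyMk_eq z
    rw [localCohomology_map_localCohomologyMk, localCohomologyMk_eq_zero_iff] at hz
    obtain ⟨s, h, he⟩ := hz
    rw [← Abelian.Ext.comp_assoc _ _ _ (zero_add i) (add_zero i) (by lia)] at he
    obtain ⟨e₁, he₁⟩ := Abelian.Ext.covariant_sequence_exact₂ _ hS _ he
    exact ⟨localCohomologyMk I i S.X₁ s e₁, by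
      rw [localCohomology_map_localCohomologyMk, he₁, localCohomologyMk_quotientPowMap_comp]⟩
  · rintro ⟨y, rfl⟩
    obtain ⟨t, e, rfl⟩ := exists_localCohomologyMk_eq y
    rw [localCohomology_map_localCohomologyMk, localCohomology_map_localCohomologyMk,
      Abelian.Ext.comp_assoc _ _ _ _ (add_zero 0) (by lia), Abelian.Ext.mk₀_comp_mk₀, S.zero,
      Abelian.Ext.mk₀_zero, Abelian.Ext.comp_zero, map_zero]

lemma localCohomology_exact₃ :
    Function.Exact ((localCohomology I i).map S.g) (localCohomologyδ I i hS) := by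
  intro z
  refine ⟨fun hz ↦ ?_, ?_⟩
  · obtain ⟨t, e, rfl⟩ := exists_localCohomologyMk_eq z
    rw [localCohomologyδ_localCohomologyMk, localCohomologyMk_eq_zero_iff] at hz
    obtain ⟨s, h, he⟩ := hz
    rw [← Abelian.Ext.comp_assoc _ _ _ (zero_add i) _ (by lia)] at he
    obtain ⟨e₂, he₂⟩ := Abelian.Ext.covariant_sequence_exact₃ _ hS _ _ he
    exact ⟨localCohomologyMk I i S.X₂ s e₂, by
      rw [localCohomology_map_localCohomologyMk, he₂, localCohomologyMk_quotientPowMap_comp]⟩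
  · rintro ⟨y, rfl⟩
    obtain ⟨t, e, rfl⟩ := exists_localCohomologyMk_eq y
    rw [localCohomology_map_localCohomologyMk, localCohomologyδ_localCohomologyMk,
      Abelian.Ext.comp_assoc _ _ _ _ (zero_add 1) (by lia), hS.comp_extClass,
      Abelian.Ext.comp_zero, map_zero]

lemma localCohomology_exact₁ :
    Function.Exact (localCohomologyδ I i hS) ((localCohomology I (i + 1)).map S.f) := by
  intro z
  refine ⟨fun hz ↦ ?_, ?_⟩
  · obtain ⟨t, e, rfl⟩ := exists_localCohomologyMk_eq z
    rw [localCohomology_map_localCohomologyMk, localCohomologyMk_eq_zero_iff] at hz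
    obtain ⟨s, h, he⟩ := hz
    rw [← Abelian.Ext.comp_assoc _ _ _ (zero_add _) (add_zero _) (by lia)] at he
    obtain ⟨e₃, he₃⟩ := Abelian.Ext.covariant_sequence_exact₁ _ hS _ he rfl
    exact ⟨localCohomologyMk I i S.X₃ s e₃, by
      rw [localCohomologyδ_localCohomologyMk, he₃, localCohomologyMk_quotientPowMap_comp]⟩
  · rintro ⟨y, rfl⟩
    obtain ⟨t, e, rfl⟩ := exists_localCohomologyMk_eq y
    rw [localCohomologyδ_localCohomologyMk, localCohomology_map_localCohomologyMk,
      Abelian.Ext.comp_assoc _ _ _ _ (add_zero 1) (by lia), hS.extClass_comp,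
      Abelian.Ext.comp_zero, map_zero]

end LongExactSequence

end LocalCohomology

section Torsion

variable {A : Type u} [CommRing A] {I : Ideal A} {N : Type v} [AddCommGroup N] [Module A N]
  {N' : Type w} [AddCommGroup N'] [Module A N']

lemma mem_primaryComponent_iff {z : N} :
    z ∈ Ideal.primaryComponent N I ↔ ∃ n, ∀ a ∈ I ^ n, a • z = 0 := by
  simp [Ideal.primaryComponent_mem]

lemma primaryComponent_eq_top_iff :
    Ideal.primaryComponent N I = ⊤ ↔ ∀ z : N, ∃ n, ∀ a ∈ I ^ n, a • z = 0 := by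
  simp [Submodule.eq_top_iff', mem_primaryComponent_iff]

lemma primaryComponent_primaryComponent :
    Ideal.primaryComponent (Ideal.primaryComponent N I) I = ⊤ := by
  rw [primaryComponent_eq_top_iff]
  rintro ⟨z, hz⟩
  simpa [Subtype.ext_iff] using mem_primaryComponent_iff.1 hz

lemma primaryComponent_eq_top_of_injective (hN' : Ideal.primaryComponent N' I = ⊤)
    {f : N →ₗ[A] N'} (hf : Function.Injective f) : Ideal.primaryComponent N I = ⊤ := by
  rw [primaryComponent_eq_top_iff] at hN' ⊢
  simpa only [← map_smul, map_eq_zero_iff f hf] using fun z ↦ hN' (f z)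

lemma primaryComponent_eq_top_of_surjective (hN : Ideal.primaryComponent N I = ⊤)
    {f : N →ₗ[A] N'} (hf : Function.Surjective f) : Ideal.primaryComponent N' I = ⊤ := by
  rw [eq_top_iff, ← LinearMap.range_eq_top.2 hf]
  rintro _ ⟨z, rfl⟩
  exact Ideal.primaryComponent_map_mem I f ⟨z, hN ▸ Submodule.mem_top⟩

lemma exists_primaryComponent_eq_torsionBySet (I : Ideal A) (N : Type v) [AddCommGroup N]
    [Module A N] [IsNoetherian A N] :
    ∃ n, Ideal.primaryComponent N I = Submodule.torsionBySet A N ↑(I ^ n) :=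
  ⟨_, WellFoundedGT.iSup_eq_monotonicSequenceLimit
    ⟨fun n ↦ Submodule.torsionBySet A N ↑(I ^ n), fun _ _ h ↦
      Submodule.torsionBySet_le_torsionBySet_pow _ _ h I⟩⟩

lemma exists_pow_smul_top_le_ker [IsNoetherian A N] (hN' : Ideal.primaryComponent N' I = ⊤)
    (g : N →ₗ[A] N') : ∃ n, I ^ n • ⊤ ≤ LinearMap.ker g := by
  obtain ⟨n, hn⟩ := exists_primaryComponent_eq_torsionBySet I (LinearMap.range g)
  rw [primaryComponent_eq_top_of_injective hN' (LinearMap.range g).subtype_injective] at hn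
  refine ⟨n, Submodule.smul_le.2 fun a ha z _ ↦ ?_⟩
  have hz : g.rangeRestrict z ∈ Submodule.torsionBySet A _ ↑(I ^ n) := hn ▸ Submodule.mem_top
  rw [LinearMap.mem_ker, map_smul]
  exact congrArg Subtype.val ((Submodule.mem_torsionBySet_iff _ _).1 hz ⟨a, ha⟩)

/- Artin–Rees: a deep enough power of `I` meets `J` inside a given `I ^ t • J`. -/
lemma exists_forall_mem_pow_map_eq_zero [IsNoetherianRing A]
    (hN : Ideal.primaryComponent N I = ⊤) {J : Ideal A} (g : J →ₗ[A] N) :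
    ∃ n, ∀ j : J, (j : A) ∈ I ^ n → g j = 0 := by
  obtain ⟨t, ht⟩ := exists_pow_smul_top_le_ker hN g
  obtain ⟨k, hk⟩ := I.exists_pow_inf_eq_pow_smul (J : Submodule A A)
  refine ⟨k + t, fun j hj ↦ ht (Submodule.mem_smul_top_iff _ _ _ |>.2 ?_)⟩
  have hj' : (j : A) ∈ I ^ (k + t) • (⊤ : Submodule A A) ⊓ J := ⟨by simpa using hj, j.2⟩
  rw [hk _ (Nat.le_add_right k t), Nat.add_sub_cancel_left] at hj'
  exact Submodule.smul_mono le_rfl inf_le_right hj'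

lemma exists_comp_eq_of_ker_le [Small.{v} A] [Module.Injective A N] {P Q : Type w}
    [AddCommGroup P] [Module A P] [AddCommGroup Q] [Module A Q] (f : P →ₗ[A] Q) (g : P →ₗ[A] N)
    (h : LinearMap.ker f ≤ LinearMap.ker g) : ∃ k : Q →ₗ[A] N, k ∘ₗ f = g := by
  obtain ⟨k, hk⟩ := (Module.Baer.of_injective ‹_›).extension_property
    ((LinearMap.ker f).liftQ f le_rfl)
    (LinearMap.ker_eq_bot.1 (Submodule.ker_liftQ_eq_bot _ _ _ le_rfl))
    ((LinearMap.ker f).liftQ g h)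
  refine ⟨k, ?_⟩
  rw [← (LinearMap.ker f).liftQ_mkQ f le_rfl, ← LinearMap.comp_assoc, hk, Submodule.liftQ_mkQ]

lemma baer_primaryComponent [IsNoetherianRing A] [Small.{v} A] [Module.Injective A N] :
    Module.Baer A (Ideal.primaryComponent N I) := by
  intro J g
  obtain ⟨n, hn⟩ := exists_forall_mem_pow_map_eq_zero primaryComponent_primaryComponent g
  obtain ⟨h, hh⟩ := exists_comp_eq_of_ker_le ((I ^ n).mkQ ∘ₗ J.subtype)
    ((Ideal.primaryComponent N I).subtype ∘ₗ g) fun j hj ↦ by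
      simpa using hn j ((Submodule.Quotient.mk_eq_zero _).1 hj)
  have h_mem (c : A) : h ((I ^ n).mkQ c) ∈ Ideal.primaryComponent N I :=
    mem_primaryComponent_iff.2 ⟨n, fun a ha ↦ by
      rw [← map_smul, ← map_smul, smul_eq_mul, Submodule.mkQ_apply,
        (Submodule.Quotient.mk_eq_zero _).2 (Ideal.mul_mem_right c _ ha), map_zero]⟩
  exact ⟨LinearMap.codRestrict _ (h ∘ₗ (I ^ n).mkQ) h_mem,
    fun a ha ↦ Subtype.ext (LinearMap.congr_fun hh ⟨a, ha⟩)⟩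

lemma exists_mono_injective_primaryComponent_eq_top [IsNoetherianRing A] {N : ModuleCat.{u} A}
    (hN : Ideal.primaryComponent N I = ⊤) :
    ∃ (E : ModuleCat.{u} A) (f : N ⟶ E),
      Mono f ∧ Injective E ∧ Ideal.primaryComponent E I = ⊤ := by
  let ⟨E, _, f, hf⟩ := (EnoughInjectives.presentation N).some
  rw [ModuleCat.mono_iff_injective] at hf
  have : Module.Injective A E := Module.injective_module_of_injective_object A E
  have hfN (z : N) : f z ∈ Ideal.primaryComponent E I :=
    Ideal.primaryComponent_map_mem I f.hom ⟨z, hN ▸ Submodule.mem_top⟩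
  have := (baer_primaryComponent (I := I) (N := E)).injective
  exact ⟨ModuleCat.of A (Ideal.primaryComponent E I), ModuleCat.ofHom (f.hom.codRestrict _ hfN),
    (ModuleCat.mono_iff_injective _).2 fun _ _ h ↦ hf (congrArg Subtype.val h),
    Module.injective_object_of_injective_module A _, primaryComponent_primaryComponent⟩

/- From `I ^ (n + 2) • z = 0` one gets `x • a • z = 0` for `a ∈ I ^ n`, hence
`I ^ (n + 1) • z = 0`; so the exponent killing `z` drops to `1`. -/
lemma isTorsionBySet_of_torsionBy_le_torsionBySet (hN : Ideal.primaryComponent N I = ⊤) {x : A}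
    (hx : x ∈ I ^ 2) (h : Submodule.torsionBy A N x ≤ Submodule.torsionBySet A N I) :
    Module.IsTorsionBySet A N I := by
  intro z
  have descend (n : ℕ) (hn : ∀ b ∈ I ^ (n + 2), b • z = 0) : ∀ b ∈ I ^ (n + 1), b • z = 0 := by
    suffices I * I ^ n ≤ LinearMap.ker (LinearMap.toSpanSingleton A N z) by
      rwa [← pow_succ'] at this
    rw [Ideal.mul_le]
    intro b hb a ha
    have hxa : a • z ∈ Submodule.torsionBy A N x := by
      rw [Submodule.mem_torsionBy_iff, ← mul_smul, mul_comm]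
      exact hn _ (pow_add I n 2 ▸ Ideal.mul_mem_mul ha hx)
    simpa [mul_smul] using (Submodule.mem_torsionBySet_iff _ _).1 (h hxa) ⟨b, hb⟩
  obtain ⟨n, hn⟩ := primaryComponent_eq_top_iff.1 hN z
  have hn' : ∀ b ∈ I ^ (n + 1), b • z = 0 := fun b hb ↦ hn b (Ideal.pow_le_pow_right n.le_succ hb)
  clear hn
  induction n with
  | zero => simpa using hn'
  | succ n ih => exact ih (descend n hn')

end Torsion

section Vanishing

variable {A : Type u} [CommRing A] {I : Ideal A} {M : ModuleCat.{u} A}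

lemma localCohomology_map_smul_id {i : ℕ} (a : A) (z : (localCohomology I i).obj M) :
    (localCohomology I i).map (a • 𝟙 M) z = a • z := by
  obtain ⟨t, e, rfl⟩ := exists_localCohomologyMk_eq z
  rw [localCohomology_map_localCohomologyMk, Abelian.Ext.mk₀_smul, Abelian.Ext.comp_smul,
    Abelian.Ext.comp_mk₀_id, map_smul]

lemma primaryComponent_localCohomology (i : ℕ) :
    Ideal.primaryComponent ((localCohomology I i).obj M) I = ⊤ := by
  rw [primaryComponent_eq_top_iff]
  intro z
  obtain ⟨t, e, rfl⟩ := exists_localCohomologyMk_eq z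
  refine ⟨t, fun a ha ↦ ?_⟩
  have ha' : a • 𝟙 (ModuleCat.of A (A ⧸ I ^ t)) = 0 := by
    ext
    exact (Algebra.algebraMap_eq_smul_one a).symm.trans (Ideal.Quotient.eq_zero_iff_mem.2 ha)
  rw [← map_smul, ← Abelian.Ext.mk₀_id_comp e, ← Abelian.Ext.smul_comp, ← Abelian.Ext.mk₀_smul,
    ha', Abelian.Ext.mk₀_zero, Abelian.Ext.zero_comp, map_zero]

lemma localCohomology_zero_map_surjective {E C : ModuleCat.{u} A}
    (hE : Ideal.primaryComponent E I = ⊤) (f : E ⟶ C) [Epi f] :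
    Function.Surjective ((localCohomology I 0).map f) := by
  intro z
  obtain ⟨t, e, rfl⟩ := exists_localCohomologyMk_eq z
  obtain ⟨g, rfl⟩ := Abelian.Ext.addEquiv₀.symm.surjective e
  obtain ⟨y, hy⟩ := (ModuleCat.epi_iff_surjective f).1 ‹_› (g (1 : A ⧸ I ^ t))
  obtain ⟨n, hn⟩ := primaryComponent_eq_top_iff.1 hE y
  let s := max t n
  let k : ModuleCat.of A (A ⧸ I ^ s) ⟶ E := ModuleCat.ofHom <| (I ^ s).liftQ
    (LinearMap.toSpanSingleton A E y) fun a ha ↦ hn a (Ideal.pow_le_pow_right (le_max_right t n) ha)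
  have hk : k ≫ f = quotientPowMap I (le_max_left t n) ≫ g := by
    ext
    exact (congrArg f (one_smul A y)).trans hy
  refine ⟨localCohomologyMk I 0 E s (Abelian.Ext.mk₀ k), ?_⟩
  rw [localCohomology_map_localCohomologyMk, Abelian.Ext.mk₀_comp_mk₀, hk,
    ← localCohomologyMk_quotientPowMap_comp (le_max_left t n), Abelian.Ext.addEquiv₀_symm_apply,
    Abelian.Ext.mk₀_comp_mk₀]

lemma subsingleton_localCohomology_succ_of_injective [Injective M] (i : ℕ) :
    Subsingleton ((localCohomology I (i + 1)).obj M) := by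
  refine subsingleton_of_forall_eq 0 fun z ↦ ?_
  obtain ⟨t, e, rfl⟩ := exists_localCohomologyMk_eq z
  rw [Abelian.Ext.eq_zero_of_injective e, map_zero]

lemma subsingleton_localCohomology_succ_of_surjective {i : ℕ} {E : ModuleCat.{u} A} (f : M ⟶ E)
    [Mono f] [Injective E]
    (h : Function.Surjective ((localCohomology I i).map (Limits.cokernel.π f))) :
    Subsingleton ((localCohomology I (i + 1)).obj M) := by
  have hS : (ShortComplex.mk f (Limits.cokernel.π f) (Limits.cokernel.condition f)).ShortExact :=
    { exact := ShortComplex.exact_cokernel f }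
  have := subsingleton_localCohomology_succ_of_injective (I := I) (M := E) i
  refine subsingleton_of_forall_eq 0 fun z ↦ ?_
  obtain ⟨w, rfl⟩ := (localCohomology_exact₁ hS z).1 (Subsingleton.elim _ _)
  obtain ⟨v, rfl⟩ := h w
  exact (localCohomology_exact₃ hS).apply_apply_eq_zero v

lemma subsingleton_localCohomology_succ [IsNoetherianRing A]
    (hM : Ideal.primaryComponent M I = ⊤) (i : ℕ) :
    Subsingleton ((localCohomology I (i + 1)).obj M) := by
  induction i generalizing M with
  | zero =>
    obtain ⟨E, f, _, _, hE⟩ := exists_mono_injective_primaryComponent_eq_top hM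
    exact subsingleton_localCohomology_succ_of_surjective f
      (localCohomology_zero_map_surjective hE (Limits.cokernel.π f))
  | succ i ih =>
    obtain ⟨E, f, _, _, hE⟩ := exists_mono_injective_primaryComponent_eq_top hM
    have := ih (primaryComponent_eq_top_of_surjective hE
      ((ModuleCat.epi_iff_surjective (Limits.cokernel.π f)).1 inferInstance))
    exact subsingleton_localCohomology_succ_of_surjective f (Function.surjective_to_subsingleton _)

lemma localCohomology_succ_map_injective [IsNoetherianRing A] {S : ShortComplex (ModuleCat.{u} A)}
    (hS : S.ShortExact) (hS₁ : Ideal.primaryComponent S.X₁ I = ⊤) (i : ℕ) :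
    Function.Injective ((localCohomology I (i + 1)).map S.g) := by
  refine (injective_iff_map_eq_zero _).2 fun z hz ↦ ?_
  obtain ⟨y, rfl⟩ := (localCohomology_exact₂ hS z).1 hz
  have := subsingleton_localCohomology_succ hS₁ i
  rw [Subsingleton.elim y 0, map_zero]

end Vanishing

section WeakSequence

variable {A : Type u} [CommRing A] {I : Ideal A} {M : ModuleCat.{u} A} {a : A}

lemma torsionBy_localCohomology_zero_le
    (h : Submodule.torsionBy A M a ≤ Submodule.torsionBySet A M I) :
    Submodule.torsionBy A ((localCohomology I 0).obj M) a ≤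
      Submodule.torsionBySet A ((localCohomology I 0).obj M) I := by
  intro z hz
  obtain ⟨t, e, rfl⟩ := exists_localCohomologyMk_eq z
  rw [Submodule.mem_torsionBy_iff, ← map_smul, localCohomologyMk_eq_zero_iff] at hz
  obtain ⟨s, hs, he⟩ := hz
  obtain ⟨g, hg⟩ := Abelian.Ext.addEquiv₀.symm.surjective
    ((Abelian.Ext.mk₀ (quotientPowMap I hs)).comp e (zero_add 0))
  rw [Abelian.Ext.addEquiv₀_symm_apply] at hg
  rw [Abelian.Ext.comp_smul, ← hg, ← Abelian.Ext.mk₀_smul, Abelian.Ext.mk₀_eq_zero_iff] at he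
  refine (Submodule.mem_torsionBySet_iff _ _).2 fun r ↦ ?_
  have hrg : (r : A) • g = 0 := by
    ext
    exact (Submodule.mem_torsionBySet_iff _ _).1 (h (ConcreteCategory.congr_hom he _)) r
  rw [← localCohomologyMk_quotientPowMap_comp hs, ← hg, ← map_smul, ← Abelian.Ext.mk₀_smul, hrg,
    Abelian.Ext.mk₀_zero, map_zero]

lemma torsionBy_localCohomology_succ_le [IsNoetherianRing A] {i : ℕ}
    (h : Submodule.torsionBy A M a ≤ Submodule.torsionBySet A M I)
    (hI : Module.IsTorsionBySet A ((localCohomology I i).obj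
      (ModuleCat.of A (M ⧸ LinearMap.range (LinearMap.lsmul A M a)))) I) :
    Submodule.torsionBy A ((localCohomology I (i + 1)).obj M) a ≤
      Submodule.torsionBySet A ((localCohomology I (i + 1)).obj M) I := by
  intro z hz
  let ℓ := LinearMap.lsmul A M a
  let S := ℓ.rangeRestrict.shortComplexKer
  have hS : S.ShortExact := LinearMap.shortExact_shortComplexKer ℓ.surjective_rangeRestrict
  have hS₁ : Ideal.primaryComponent S.X₁ I = ⊤ := primaryComponent_eq_top_iff.2 fun y ↦
    ⟨1, fun r hr ↦ Subtype.ext <| (Submodule.mem_torsionBySet_iff _ _).1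
      (h (congrArg Subtype.val y.2)) ⟨r, by simpa using hr⟩⟩
  let T := ModuleCat.shortComplexOfCompEqZero (LinearMap.range ℓ).subtype (LinearMap.range ℓ).mkQ
    (LinearMap.exact_subtype_mkQ _).linearMap_comp_eq_zero
  have hT : T.ShortExact := ModuleCat.shortComplex_shortExact T (LinearMap.exact_subtype_mkQ _)
    (Submodule.subtype_injective _) (Submodule.mkQ_surjective _)
  have hST : S.g ≫ T.f = a • 𝟙 M := rfl
  obtain ⟨w, hw⟩ := (localCohomology_exact₁ hT ((localCohomology I (i + 1)).map S.g z)).1 <| by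
    rw [← ConcreteCategory.comp_apply, ← Functor.map_comp, hST, localCohomology_map_smul_id]
    exact hz
  refine (Submodule.mem_torsionBySet_iff _ _).2 fun r ↦
    localCohomology_succ_map_injective hS hS₁ i ?_
  rw [map_smul, map_zero, ← hw, ← map_smul, @hI w r, map_zero]

variable {N : Type} [AddCommGroup N] [Module R N] {n : ℕ}

lemma pSpan_zero (x : Fin (n + 1) → R) : pSpan N x 0 = ⊥ := by
  simp [pSpan]

lemma pSpan_succ (x : Fin (n + 1) → R) (k : Fin n) :
    pSpan N x k.succ = LinearMap.range (LinearMap.lsmul R N (x 0)) ⊔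
      Ideal.span (Fin.tail x '' {j | j < k}) • (⊤ : Submodule R N) := by
  have himage : x '' {j | j < k.succ} = insert (x 0) (Fin.tail x '' {j | j < k}) := by
    ext y
    simp [Fin.exists_fin_succ, Fin.tail, eq_comm]
  have hrange : LinearMap.range (LinearMap.lsmul R N (x 0)) = Ideal.span {x 0} • ⊤ := by
    rw [Submodule.ideal_span_singleton_smul]
    ext y
    simp [Submodule.mem_smul_pointwise_iff_exists]
  rw [pSpan, himage, Ideal.span_insert, Submodule.sup_smul, hrange]

lemma comap_mkQ_pSpan_tail (x : Fin (n + 1) → R) (k : Fin n) :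
    (pSpan (N ⧸ LinearMap.range (LinearMap.lsmul R N (x 0))) (Fin.tail x) k).comap
      (Submodule.mkQ _) = pSpan N x k.succ := by
  rw [pSpan_succ, ← Submodule.comap_map_mkQ, pSpan, Submodule.map_smul'', Submodule.map_top,
    Submodule.range_mkQ]

lemma IsWeakSeq.torsionBy_le {I : Ideal R} {x : Fin (n + 1) → R} (hx : IsWeakSeq I N x) :
    Submodule.torsionBy R N (x 0) ≤ Submodule.torsionBySet R N I := fun m hm ↦
  (Submodule.mem_torsionBySet_iff _ _).2 fun r ↦ by
    simpa [pSpan_zero] using hx 0 m (by simpa [pSpan_zero] using hm) r r.2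

lemma IsWeakSeq.tail {I : Ideal R} {x : Fin (n + 1) → R} (hx : IsWeakSeq I N x) :
    IsWeakSeq I (N ⧸ LinearMap.range (LinearMap.lsmul R N (x 0))) (Fin.tail x) := by
  intro k c hc a ha
  obtain ⟨m, rfl⟩ := Submodule.mkQ_surjective _ c
  rw [← map_smul, ← Submodule.mem_comap, comap_mkQ_pSpan_tail] at hc ⊢
  exact hx k.succ m hc a ha

end WeakSequence

theorem theorem_4_1_ii_iii_general [IsNoetherianRing R] (I : Ideal R) (M : Type) [AddCommGroup M]
    [Module R M] {n : ℕ} (x : Fin n → R) (hx2 : ∀ j, x j ∈ I ^ 2) (hw : IsWeakSeq I M x) :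
    ∀ i < n, ∀ r ∈ I, ∀ m : locH I i M, r • m = 0 := by
  suffices ∀ i < n, Module.IsTorsionBySet R (locH I i M) I from
    fun i hi r hr m ↦ @this i hi m ⟨r, hr⟩
  intro i hi
  induction i generalizing n M with
  | zero =>
    obtain ⟨n, rfl⟩ := Nat.exists_eq_add_one.2 hi
    exact isTorsionBySet_of_torsionBy_le_torsionBySet (primaryComponent_localCohomology 0) (hx2 0)
      (torsionBy_localCohomology_zero_le hw.torsionBy_le)
  | succ i ih =>
    obtain ⟨n, rfl⟩ := Nat.exists_eq_add_one.2 (Nat.zero_lt_of_lt hi)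
    exact isTorsionBySet_of_torsionBy_le_torsionBySet (primaryComponent_localCohomology (i + 1))
      (hx2 0) (torsionBy_localCohomology_succ_le hw.torsionBy_le
        (ih _ (Fin.tail x) (fun j ↦ hx2 j.succ) hw.tail (Nat.lt_of_succ_lt_succ hi)))

/-- **Theorem 4.1, (ii) ⟹ (iii).** Suppose `cd(I,M) = ara(I,M)`. If there exists an
`I`-relative system of parameters of `M` contained in `I²` which is an `I`-weak sequence on
`M`, then `I • H^i_I(M) = 0` for all `0 ≤ i < cd(I,M)`. -/
theorem theorem_4_1_ii_iii [IsNoetherianRing R] (I : Ideal R)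
    (M : Type) [AddCommGroup M] [Module R M] [Module.Finite R M]
    (c : ℕ) (hc : IsCd I M c) (ha : IsAra I M c)
    (x : Fin c → R) (hx : IsRsop I M x) (hx2 : ∀ j, x j ∈ I ^ 2)
    (hw : IsWeakSeq I M x) :
    ∀ i : ℕ, i < c → ∀ r ∈ I, ∀ m : locH I i M, r • m = 0 :=
  theorem_4_1_ii_iii_general I M x hx2 hw
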